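/- Let K be a field, f ∈ K[x] of degree n ≥ 1, a ∈ K[x] of degree < n, 1 ≤ m ≤ n, and d ≥ 1. Then rank Hk_{m,d}(a,f) ≤ ν_{m,m}, where ν_{m,m} denotes the determinantal degree of the K[y]-submodule R_{m,m}^{(a,f)} of K[y]^m, and equality rank Hk_{m,d}(a,f) = ν_{m,m} holds if and only if H(y) = X^T·(y·I_n − M_a)^{−1}·X is describable in degree d. -/

import Mathlib

open Polynomial Matrix

noncomputable section

variable {K : Type*} [Field K]

/-- Matrix of multiplication by `a` modulo `f` in the basis `1, x, ..., x^(n-1)`: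
its `k`-th column is the coefficient vector of `(x^k * a) mod f`. -/
def mulMat (f a : K[X]) (n : ℕ) : Matrix (Fin n) (Fin n) K :=
  fun i k => ((X ^ (k : ℕ) * a) % f).coeff (i : ℕ)

/-- `r(x, a(x))` where `r` is the bivariate polynomial with coefficient vector `v`
(under the coefficient-vector identification `r = v 0 + (v 1) x + ⋯ + (v (m-1)) x^(m-1)`). -/
def relEval (a : K[X]) {m : ℕ} (v : Fin m → K[X]) : K[X] :=
  ∑ i : Fin m, X ^ (i : ℕ) * ((v i).comp a)

/-- `v` represents an element of the module of relations `R_m^{(a,f)}`. -/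
def IsRelation (f a : K[X]) {m : ℕ} (v : Fin m → K[X]) : Prop :=
  f ∣ relEval a v

/-- Matrix of relations of `R_m^{(a,f)}`: nonsingular, all columns are relations. -/
def IsRelMat (f a : K[X]) {m : ℕ} (R : Matrix (Fin m) (Fin m) K[X]) : Prop :=
  R.det ≠ 0 ∧ ∀ j, IsRelation f a (fun i => R i j)

/-- Basis of relations of `R_m^{(a,f)}`: matrix of relations whose columns generate
the module of relations. -/
def IsRelBasis (f a : K[X]) {m : ℕ} (R : Matrix (Fin m) (Fin m) K[X]) : Prop :=
  IsRelMat f a R ∧ ∀ v : Fin m → K[X], IsRelation f a v →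
    v ∈ Submodule.span K[X] (Set.range fun j => fun i => R i j)


/-- `v` represents an element of the truncated module of relations `R_{ℓ,m}^{(a,f)}`:
for every `k ≥ 0`, the coefficients of `x^0, …, x^(ℓ-1)` of `(a^k · r(x,a(x))) mod f` vanish. -/
def IsTruncRelation (f a : K[X]) (ℓ : ℕ) {m : ℕ} (v : Fin m → K[X]) : Prop :=
  ∀ (k j : ℕ), j < ℓ → ((a ^ k * relEval a v) % f).coeff j = 0

/-- The `n×m` matrix `X` whose top `m×m` block is the identity, over any `α`. -/
def Xup (α : Type*) [Zero α] [One α] (n m : ℕ) : Matrix (Fin n) (Fin m) α :=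
  fun i j => if (i : ℕ) = (j : ℕ) then 1 else 0

/-- The `ℓ×n` matrix `(I_ℓ 0)` whose left `ℓ×ℓ` block is the identity, over any `α`. -/
def projL (α : Type*) [Zero α] [One α] (ℓ n : ℕ) : Matrix (Fin ℓ) (Fin n) α :=
  fun i j => if (i : ℕ) = (j : ℕ) then 1 else 0

/-- The rational matrix `(I_ℓ 0) · (y I_n − M_a)⁻¹ · X ∈ K(y)^{ℓ×m}`. -/
def fracMat (f a : K[X]) (n ℓ m : ℕ) : Matrix (Fin ℓ) (Fin m) (RatFunc K) :=
  projL (RatFunc K) ℓ n *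
    ((charmatrix (mulMat f a n)).map (algebraMap K[X] (RatFunc K)))⁻¹ *
    Xup (RatFunc K) n m

/-- `v ∈ denom(F)`: every entry of `F·v` is a polynomial. -/
def memDenom {ℓ m : ℕ} (F : Matrix (Fin ℓ) (Fin m) (RatFunc K)) (v : Fin m → K[X]) : Prop :=
  ∀ i, ∃ p : K[X],
    F.mulVec (fun j => algebraMap K[X] (RatFunc K) (v j)) i = algebraMap K[X] (RatFunc K) p


/-- The columns of `D` form a basis of the truncated module of relations `R_{ℓ,m}^{(a,f)}`. -/
def IsTruncBasis (f a : K[X]) (ℓ : ℕ) {m : ℕ} (D : Matrix (Fin m) (Fin m) K[X]) : Prop :=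
  D.det ≠ 0 ∧ (∀ j, IsTruncRelation f a ℓ (fun i => D i j)) ∧
    ∀ v : Fin m → K[X], IsTruncRelation f a ℓ v →
      v ∈ Submodule.span K[X] (Set.range fun j => fun i => D i j)

/-- Degree of a polynomial matrix: the maximum of the degrees of its entries. -/
def matDeg {ι κ : Type*} [Fintype ι] [Fintype κ] (M : Matrix ι κ K[X]) : WithBot ℕ :=
  Finset.univ.sup fun p : ι × κ => (M p.1 p.2).degree

/-- `N·D⁻¹` is a right fraction description of `F`. -/
def IsRightDesc {ℓ m : ℕ} (F : Matrix (Fin ℓ) (Fin m) (RatFunc K))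
    (N : Matrix (Fin ℓ) (Fin m) K[X]) (D : Matrix (Fin m) (Fin m) K[X]) : Prop :=
  D.det ≠ 0 ∧ F * D.map (algebraMap K[X] (RatFunc K)) = N.map (algebraMap K[X] (RatFunc K))

/-- `D̂⁻¹·N̂` is a left fraction description of `F`. -/
def IsLeftDesc {ℓ m : ℕ} (F : Matrix (Fin ℓ) (Fin m) (RatFunc K))
    (Dh : Matrix (Fin ℓ) (Fin ℓ) K[X]) (Nh : Matrix (Fin ℓ) (Fin m) K[X]) : Prop :=
  Dh.det ≠ 0 ∧ Dh.map (algebraMap K[X] (RatFunc K)) * F = Nh.map (algebraMap K[X] (RatFunc K))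

/-- `F` is describable in degree `d`. -/
def DescribableInDegree {ℓ m : ℕ} (F : Matrix (Fin ℓ) (Fin m) (RatFunc K)) (d : ℕ) : Prop :=
  (∃ N D, IsRightDesc F N D ∧ matDeg D ≤ (d : WithBot ℕ)) ∧
    (∃ Dh Nh, IsLeftDesc F Dh Nh ∧ matDeg Dh ≤ (d : WithBot ℕ))

/-- The block Hankel matrix `Hk_{m,d}(a,f)`, indexed by `Fin d × Fin m`
(block row/column index first): its `((i,r),(j,c))` entry is `(Xᵀ · M_a^(i+j) · X) r c`. -/
def hankelMat (f a : K[X]) (n m d : ℕ) :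
    Matrix (Fin d × Fin m) (Fin d × Fin m) K :=
  fun p q => ((Xup K n m)ᵀ * (mulMat f a n) ^ ((p.1 : ℕ) + (q.1 : ℕ)) * Xup K n m) p.2 q.2

/-!
Send `u, v ∈ K[y]^m` to `∑ᵢⱼ (Xᵀ uᵢ(M_a) vⱼ(M_a) X)ᵢⱼ ∈ K`. The block Hankel matrix is the Gram
matrix of this bilinear form on the monomial vectors `y^k eᵢ` with `k < d`. The right kernel of
the form is `denom(H)`, which is the module of truncated relations; its codimension over `K` is
its determinantal degree by the Smith normal form. The left kernel is `denom(Hᵀ)`. Hence the rank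
is at most the determinantal degree, with equality exactly when the vectors of degree `< d` span
modulo both kernels. Modulo a denominator `D` of degree at most `d` every vector reduces to one of
degree `< d`; conversely, if the vectors of degree `< d` span modulo the right kernel, subtracting
from each `y^d eⱼ` its reduction yields the columns of a denominator of degree at most `d`.
-/

section PolynomialMatrix

theorem associated_det_prod_smithNormalFormCoeffs {R M ι : Type*} [CommRing R] [IsDomain R]
    [IsPrincipalIdealRing R] [AddCommGroup M] [Module R M] [Fintype ι] (b : Module.Basis ι R M)
    {φ : Module.End R M} (hφ : Function.Injective φ)
    (hrank : Module.finrank R (LinearMap.range φ) = Module.finrank R M) :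
    Associated (LinearMap.det φ) (∏ i, Submodule.smithNormalFormCoeffs b hrank i) := by
  classical
  let top := Submodule.smithNormalFormTopBasis b hrank
  let bot := Submodule.smithNormalFormBotBasis b hrank
  let e := LinearEquiv.ofInjective φ hφ
  rw [← Matrix.det_diagonal, ← LinearMap.det_toLin top]
  refine (LinearMap.associated_det_of_eq_comp
    ((top.equiv bot (Equiv.refl _)).trans e.symm) _ _ fun x => ?_).symm
  have hdiag : Matrix.toLin top top
        (Matrix.diagonal (Submodule.smithNormalFormCoeffs b hrank)) =
      (LinearMap.range φ).subtype ∘ₗ (top.equiv bot (Equiv.refl _)).toLinearMap :=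
    top.ext fun i => by
      simp [Matrix.toLin_self, Matrix.diagonal_apply, ite_smul, top, bot,
        Submodule.smithNormalFormBotBasis_def]
  rw [hdiag]
  exact (congrArg Subtype.val (e.apply_symm_apply _)).symm

theorem finite_quotient_span_singleton {g : K[X]} (hg : g ≠ 0) :
    Module.Finite K (K[X] ⧸ Ideal.span {g}) :=
  (AdjoinRoot.powerBasis hg).finite

variable {M : Type*} [AddCommGroup M] [Module K[X] M] [Module K M] [IsScalarTower K K[X] M]
  [Module.Finite K[X] M] [Module.Free K[X] M] {φ : Module.End K[X] M}

theorem finite_quotient_range (hφ : Function.Injective φ) :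
    Module.Finite K (M ⧸ LinearMap.range φ) := by
  let b := Module.Free.chooseBasis K[X] M
  have hrank := LinearMap.finrank_range_of_inj hφ
  have := fun i =>
    finite_quotient_span_singleton (Submodule.smithNormalFormCoeffs_ne_zero b hrank i)
  exact Module.Finite.equiv
    ((Submodule.quotientEquivPiSpan _ b hrank).restrictScalars K).symm

theorem finrank_quotient_range (hφ : Function.Injective φ) :
    Module.finrank K (M ⧸ LinearMap.range φ) = (LinearMap.det φ).natDegree := by
  let b := Module.Free.chooseBasis K[X] M
  have hrank := LinearMap.finrank_range_of_inj hφ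
  have hne := Submodule.smithNormalFormCoeffs_ne_zero b hrank
  have := fun i => finite_quotient_span_singleton (hne i)
  rw [Submodule.finrank_quotient_eq_sum K b hrank,
    natDegree_eq_of_degree_eq (degree_eq_degree_of_associated
      (associated_det_prod_smithNormalFormCoeffs b hφ hrank)),
    natDegree_prod _ _ fun i _ => hne i]
  exact Finset.sum_congr rfl fun i _ => (AdjoinRoot.powerBasis (hne i)).finrank

variable {ι : Type*} [Fintype ι]

theorem degree_dotProduct_lt {u v : ι → K[X]} {a b : ℕ} (hu : ∀ i, (u i).degree ≤ a)
    (hv : ∀ i, (v i).degree < b) : (u ⬝ᵥ v).degree < (a + b : ℕ) := by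
  refine (degree_sum_le _ _).trans_lt ((Finset.sup_lt_iff (WithBot.bot_lt_coe _)).2 fun i _ => ?_)
  rw [degree_mul, Nat.cast_add]
  rcases eq_or_ne (u i) 0 with hui | hui
  · rw [hui, degree_zero, WithBot.bot_add]
    exact WithBot.bot_lt_coe (a + b)
  · exact WithBot.add_lt_add_of_le_of_lt (degree_ne_bot.2 hui) (hu i) (hv i)

variable [DecidableEq ι] {D : Matrix ι ι K[X]} {d : ℕ}

theorem mulVecLin_injective_of_det_ne_zero (hdet : D.det ≠ 0) :
    Function.Injective D.mulVecLin :=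
  (injective_iff_map_eq_zero _).2 fun _ => eq_zero_of_mulVec_eq_zero hdet

theorem finite_quotient_range_mulVecLin (hdet : D.det ≠ 0) :
    Module.Finite K ((ι → K[X]) ⧸ LinearMap.range D.mulVecLin) :=
  finite_quotient_range (mulVecLin_injective_of_det_ne_zero hdet)

theorem finrank_quotient_range_mulVecLin (hdet : D.det ≠ 0) :
    Module.finrank K ((ι → K[X]) ⧸ LinearMap.range D.mulVecLin) = D.det.natDegree := by
  rw [finrank_quotient_range (mulVecLin_injective_of_det_ne_zero hdet), ← toLin'_apply',
    LinearMap.det_toLin']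

theorem exists_degree_sub_mulVec_lt (hdet : D.det ≠ 0) (hD : ∀ i j, (D i j).degree ≤ d)
    (v : ι → K[X]) : ∃ q : ι → K[X], ∀ i, ((v - D *ᵥ q) i).degree < d := by
  -- Divide `D⁻¹ v = (adj D) v / det D` entrywise: if `s` collects the remainders of the numerators,
  -- then `v - D q = D s / det D`.
  let q : ι → K[X] := fun i => (D.adjugate *ᵥ v) i / D.det
  let s : ι → K[X] := fun i => (D.adjugate *ᵥ v) i % D.det
  have hqs : D.adjugate *ᵥ v = D.det • q + s :=
    funext fun i => (EuclideanDomain.div_add_mod _ _).symm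
  have hDs : D.det • (v - D *ᵥ q) = D *ᵥ s := by
    rw [eq_sub_of_add_eq' hqs.symm, mulVec_sub, mulVec_mulVec, mul_adjugate, smul_mulVec,
      one_mulVec, mulVec_smul, smul_sub]
  refine ⟨q, fun i => ?_⟩
  have hlt : ((D *ᵥ s) i).degree < (d + D.det.natDegree : ℕ) :=
    degree_dotProduct_lt (hD i) fun j =>
      (EuclideanDomain.mod_lt _ hdet).trans_le degree_le_natDegree
  rw [← hDs, Pi.smul_apply, smul_eq_mul, degree_mul, add_comm d, Nat.cast_add,
    ← degree_eq_natDegree hdet] at hlt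
  exact lt_of_add_lt_add_left hlt

theorem det_ne_zero_of_degree_sub_lt
    (hD : ∀ i j, ((D - diagonal fun _ => X ^ d : Matrix ι ι K[X]) i j).degree < d) : D.det ≠ 0 := by
  intro hdet
  obtain ⟨v, hv, hDv⟩ := exists_mulVec_eq_zero_iff.2 hdet
  have : Nonempty ι := (Function.ne_iff.1 hv).nonempty
  obtain ⟨i, hi⟩ := Finite.exists_max fun i => (v i).degree
  have hvi : v i ≠ 0 := fun h0 =>
    hv (funext fun j => degree_eq_bot.1 (le_bot_iff.1 (by simpa [h0] using hi j)))
  have hlead : X ^ d * v i = -(v ⬝ᵥ (D - diagonal fun _ => X ^ d : Matrix ι ι K[X]) i) := by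
    have := congrFun (sub_mulVec D (diagonal fun _ => X ^ d) v) i
    rw [Pi.sub_apply, hDv, mulVec_diagonal, Pi.zero_apply, zero_sub] at this
    rw [dotProduct_comm, ← neg_eq_iff_eq_neg]
    exact this.symm
  have hlt := degree_dotProduct_lt (fun j => (hi j).trans degree_le_natDegree) (hD i)
  rw [← degree_neg, ← hlead, degree_mul, degree_X_pow, degree_eq_natDegree hvi, add_comm,
    Nat.cast_add] at hlt
  exact lt_irrefl _ hlt

end PolynomialMatrix

section GramMatrix

theorem finrank_range_comp_le {V Q W : Type*} [AddCommGroup V] [Module K V] [AddCommGroup Q]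
    [Module K Q] [Module.Finite K Q] [AddCommGroup W] [Module K W] (γ : Q →ₗ[K] W)
    (π : V →ₗ[K] Q) : Module.finrank K (LinearMap.range (γ ∘ₗ π)) ≤ Module.finrank K Q :=
  (Submodule.finrank_mono (LinearMap.range_comp_le_range π γ)).trans (LinearMap.finrank_range_le γ)

theorem finrank_range_comp_eq_iff {V Q W : Type*} [AddCommGroup V] [Module K V] [AddCommGroup Q]
    [Module K Q] [Module.Finite K Q] [AddCommGroup W] [Module K W] (γ : Q →ₗ[K] W)
    (π : V →ₗ[K] Q) :
    Module.finrank K (LinearMap.range (γ ∘ₗ π)) = Module.finrank K Q ↔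
      LinearMap.range π = ⊤ ∧ LinearMap.ker γ = ⊥ := by
  constructor
  · intro heq
    have hπ : Module.finrank K (LinearMap.range (γ ∘ₗ π)) ≤
        Module.finrank K (LinearMap.range π) := by
      rw [LinearMap.range_comp]
      exact Submodule.finrank_map_le _ _
    have hγ : Module.finrank K (LinearMap.range (γ ∘ₗ π)) ≤
        Module.finrank K (LinearMap.range γ) :=
      Submodule.finrank_mono (LinearMap.range_comp_le_range π γ)
    have hrn := LinearMap.finrank_range_add_finrank_ker γ
    exact ⟨Submodule.eq_top_of_finrank_eq ((Submodule.finrank_le _).antisymm (heq ▸ hπ)),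
      Submodule.finrank_eq_zero.1 (by omega)⟩
  · rintro ⟨hπ, hγ⟩
    rw [LinearMap.range_comp, hπ, Submodule.map_top]
    exact LinearMap.finrank_range_of_inj (LinearMap.ker_eq_bot.1 hγ)

variable {U V I J : Type*} [AddCommGroup U] [Module K U] [AddCommGroup V] [Module K V]

/-- Gram matrix of two families of vectors with respect to a bilinear form. -/
def gramMatrix (B : U →ₗ[K] V →ₗ[K] K) (x : I → U) (y : J → V) : Matrix I J K :=
  Matrix.of fun i j => B (x i) (y j)

/-- The map `v ↦ (B (x i) v)ᵢ` on the quotient by the right kernel of `B`, through which the Gram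
matrix of `x` and any other family factors. -/
def pairWithFamily (B : U →ₗ[K] V →ₗ[K] K) (x : I → U) :
    V ⧸ LinearMap.ker B.flip →ₗ[K] I → K :=
  (LinearMap.ker B.flip).liftQ (LinearMap.pi fun i => B (x i)) fun _ hv =>
    LinearMap.mem_ker.2 (funext fun i => LinearMap.congr_fun (LinearMap.mem_ker.1 hv) (x i))

variable (B : U →ₗ[K] V →ₗ[K] K) (x : I → U) (y : J → V)

theorem ker_pairWithFamily_eq_bot_iff [Finite I] :
    LinearMap.ker (pairWithFamily B x) = ⊥ ↔
      Submodule.span K (Set.range x) ⊔ LinearMap.ker B = ⊤ := by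
  rw [pairWithFamily, Submodule.ker_liftQ, ← LinearMap.le_ker_iff_map, Submodule.ker_mkQ]
  constructor
  · intro hker
    rw [← Submodule.comap_map_eq, Submodule.map_span, ← Set.range_comp, eq_top_iff]
    refine fun u _ => mem_span_of_iInf_ker_le_ker fun v hv => ?_
    rw [← LinearMap.ker_pi] at hv
    exact LinearMap.congr_fun (LinearMap.mem_ker.1 (hker hv)) u
  · intro htop v hv
    have hle : Submodule.span K (Set.range x) ⊔ LinearMap.ker B ≤ LinearMap.ker (B.flip v) := by
      refine sup_le (Submodule.span_le.2 ?_) fun u hu => LinearMap.congr_fun hu v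
      rintro _ ⟨i, rfl⟩
      exact congrFun hv i
    exact LinearMap.ker_eq_top.1 (top_le_iff.1 (htop ▸ hle))

variable [Fintype J]

theorem gramMatrix_mulVecLin : (gramMatrix B x y).mulVecLin =
    pairWithFamily B x ∘ₗ (LinearMap.ker B.flip).mkQ ∘ₗ Fintype.linearCombination K y := by
  classical
  refine LinearMap.pi_ext' fun j => LinearMap.ext_ring (funext fun i => ?_)
  simp [gramMatrix, pairWithFamily]

theorem rank_gramMatrix_le [Module.Finite K (V ⧸ LinearMap.ker B.flip)] :
    (gramMatrix B x y).rank ≤ Module.finrank K (V ⧸ LinearMap.ker B.flip) := by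
  rw [Matrix.rank, gramMatrix_mulVecLin]
  exact finrank_range_comp_le _ _

theorem rank_gramMatrix_eq_iff [Finite I] [Module.Finite K (V ⧸ LinearMap.ker B.flip)] :
    (gramMatrix B x y).rank = Module.finrank K (V ⧸ LinearMap.ker B.flip) ↔
      Submodule.span K (Set.range y) ⊔ LinearMap.ker B.flip = ⊤ ∧
        Submodule.span K (Set.range x) ⊔ LinearMap.ker B = ⊤ := by
  rw [Matrix.rank, gramMatrix_mulVecLin, finrank_range_comp_eq_iff, ker_pairWithFamily_eq_bot_iff,
    LinearMap.range_comp, Fintype.range_linearCombination, Submodule.map_mkQ_eq_top, sup_comm]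

end GramMatrix

section FractionDescription

variable {ρ κ : Type*} {ℓ m d : ℕ}

/-- Vectors of rational functions all of whose entries are polynomials. -/
def polynomialVectors (K ρ : Type*) [Field K] : Submodule K[X] (ρ → RatFunc K) :=
  LinearMap.range ((Algebra.linearMap K[X] (RatFunc K)).compLeft ρ)

/-- The `K[y]`-module `denom(F)`, with `memDenom F` as its membership predicate. -/
def denomModule [Fintype κ] (F : Matrix ρ κ (RatFunc K)) : Submodule K[X] (κ → K[X]) :=
  (polynomialVectors K ρ).comap
    (F.mulVecLin.restrictScalars K[X] ∘ₗ (Algebra.linearMap K[X] (RatFunc K)).compLeft κ)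

theorem mem_denomModule [Fintype κ] {F : Matrix ρ κ (RatFunc K)} {v : κ → K[X]} :
    v ∈ denomModule F ↔ F *ᵥ (algebraMap K[X] (RatFunc K) ∘ v) ∈ polynomialVectors K ρ :=
  Iff.rfl

theorem mem_denomModule_iff_memDenom {F : Matrix (Fin ℓ) (Fin m) (RatFunc K)} {v : Fin m → K[X]} :
    v ∈ denomModule F ↔ memDenom F v :=
  ⟨fun ⟨p, hp⟩ i => ⟨p i, (congrFun hp i).symm⟩, fun h =>
    (Classical.skolem.1 h).imp fun _ hp => funext fun i => (hp i).symm⟩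

theorem exists_isRightDesc_iff {F : Matrix (Fin ℓ) (Fin m) (RatFunc K)}
    {D : Matrix (Fin m) (Fin m) K[X]} :
    (∃ N, IsRightDesc F N D) ↔ D.det ≠ 0 ∧ LinearMap.range D.mulVecLin ≤ denomModule F := by
  constructor
  · rintro ⟨N, hdet, hN⟩
    refine ⟨hdet, ?_⟩
    rintro _ ⟨q, rfl⟩
    refine ⟨N *ᵥ q, funext fun i => ?_⟩
    have hD := funext fun k => (algebraMap K[X] (RatFunc K)).map_mulVec D q k
    calc algebraMap K[X] (RatFunc K) ((N *ᵥ q) i)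
        = ((F * D.map (algebraMap K[X] (RatFunc K))) *ᵥ (algebraMap K[X] (RatFunc K) ∘ q)) i := by
          rw [hN, RingHom.map_mulVec]
      _ = (F *ᵥ (algebraMap K[X] (RatFunc K) ∘ (D *ᵥ q))) i := by
          rw [← mulVec_mulVec, ← hD]
          rfl
  · rintro ⟨hdet, hD⟩
    have hcol (j) : memDenom F (D.col j) :=
      mem_denomModule_iff_memDenom.1 (hD ⟨Pi.single j 1, D.mulVec_single_one j⟩)
    choose N hN using hcol
    exact ⟨fun i j => N j i, hdet, Matrix.ext fun i j => hN j i⟩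

/-- The vectors `y^k eᵢ` with `k < d`, indexed like the rows and columns of `hankelMat`. -/
def monomialVec (K κ : Type*) [Field K] [DecidableEq κ] (d : ℕ) (p : Fin d × κ) : κ → K[X] :=
  Pi.single p.2 (X ^ (p.1 : ℕ))

theorem mem_span_range_monomialVec [Finite κ] [DecidableEq κ] {v : κ → K[X]} :
    v ∈ Submodule.span K (Set.range (monomialVec K κ d)) ↔ ∀ i, (v i).degree < d := by
  have hspan (i : κ) : Submodule.span K (Set.range fun k => monomialVec K κ d (k, i)) =
      (degreeLT K d).map (LinearMap.single K (fun _ => K[X]) i) := by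
    classical
    rw [degreeLT_eq_span_X_pow, Submodule.map_span, Finset.coe_image, Finset.coe_range,
      ← Fin.range_val, ← Set.range_comp, ← Set.range_comp]
    rfl
  have : Submodule.span K (Set.range (monomialVec K κ d)) =
      Submodule.pi Set.univ fun _ => degreeLT K d := by
    rw [← Submodule.iSup_map_single, ← iSup_congr hspan, ← Submodule.span_iUnion]
    congr 1
    ext w
    simp only [Set.mem_range, Set.mem_iUnion, Prod.exists]
    exact exists_comm
  rw [this]
  simp [Submodule.mem_pi, mem_degreeLT]

theorem matDeg_le_iff [Fintype ρ] [Fintype κ] {D : Matrix ρ κ K[X]}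
    {d : WithBot ℕ} : matDeg D ≤ d ↔ ∀ i j, (D i j).degree ≤ d := by
  simp [matDeg, Finset.sup_le_iff]

theorem exists_isRightDesc_matDeg_le_iff {F : Matrix (Fin ℓ) (Fin m) (RatFunc K)} :
    (∃ N D, IsRightDesc F N D ∧ matDeg D ≤ d) ↔
      Submodule.span K (Set.range (monomialVec K (Fin m) d)) ⊔
        (denomModule F).restrictScalars K = ⊤ := by
  constructor
  · rintro ⟨N, D, hND, hD⟩
    obtain ⟨hdet, hle⟩ := exists_isRightDesc_iff.1 ⟨N, hND⟩
    refine eq_top_iff.2 fun v _ => ?_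
    obtain ⟨q, hq⟩ := exists_degree_sub_mulVec_lt hdet (matDeg_le_iff.1 hD) v
    rw [← sub_add_cancel v (D *ᵥ q)]
    exact Submodule.add_mem_sup (mem_span_range_monomialVec.2 hq) (hle ⟨q, rfl⟩)
  · intro htop
    have hdecomp (j : Fin m) : ∃ w r : Fin m → K[X], (∀ i, (w i).degree < d) ∧
        r ∈ denomModule F ∧ w + r = Pi.single j (X ^ d) := by
      obtain ⟨w, hw, r, hr, hwr⟩ := Submodule.mem_sup.1 (htop ▸ Submodule.mem_top)
      exact ⟨w, r, mem_span_range_monomialVec.1 hw, hr, hwr⟩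
    choose w r hw hr hwr using hdecomp
    let D : Matrix (Fin m) (Fin m) K[X] := fun i j => r j i
    have hDw (i j) : (D - diagonal fun _ => X ^ d : Matrix _ _ K[X]) i j = -w j i := by
      have := congrFun (hwr j) i
      rw [Pi.single_apply] at this
      rw [Matrix.sub_apply, diagonal_apply, ← this]
      exact sub_add_cancel_right _ _
    have hlow (i j) : ((D - diagonal fun _ => X ^ d : Matrix _ _ K[X]) i j).degree < d := by
      rw [hDw, degree_neg]
      exact hw j i
    have hle : LinearMap.range D.mulVecLin ≤ denomModule F := by
      rw [range_mulVecLin, Submodule.span_le]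
      rintro _ ⟨j, rfl⟩
      exact hr j
    obtain ⟨N, hN⟩ := exists_isRightDesc_iff.2 ⟨det_ne_zero_of_degree_sub_lt hlow, hle⟩
    refine ⟨N, D, hN, matDeg_le_iff.2 fun i j => ?_⟩
    rw [← sub_add_cancel D (diagonal fun _ => X ^ d), Matrix.add_apply, diagonal_apply]
    refine (degree_add_le _ _).trans (max_le (hlow i j).le ?_)
    split_ifs <;> simp

theorem isLeftDesc_iff_isRightDesc_transpose {F N : Matrix (Fin ℓ) (Fin m) _}
    {D : Matrix (Fin ℓ) (Fin ℓ) K[X]} :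
    IsLeftDesc F D N ↔ IsRightDesc Fᵀ Nᵀ Dᵀ := by
  rw [IsLeftDesc, IsRightDesc, det_transpose, transpose_map, transpose_map, ← transpose_mul,
    transpose_inj]

theorem exists_isLeftDesc_matDeg_le_iff {F : Matrix (Fin ℓ) (Fin m) (RatFunc K)} :
    (∃ D N, IsLeftDesc F D N ∧ matDeg D ≤ d) ↔
      Submodule.span K (Set.range (monomialVec K (Fin ℓ) d)) ⊔
        (denomModule Fᵀ).restrictScalars K = ⊤ := by
  rw [← exists_isRightDesc_matDeg_le_iff]
  constructor
  · rintro ⟨D, N, hDN, hD⟩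
    exact ⟨Nᵀ, Dᵀ, isLeftDesc_iff_isRightDesc_transpose.1 hDN,
      matDeg_le_iff.2 fun i j => matDeg_le_iff.1 hD j i⟩
  · rintro ⟨N, D, hND, hD⟩
    exact ⟨Dᵀ, Nᵀ, isLeftDesc_iff_isRightDesc_transpose.2 hND,
      matDeg_le_iff.2 fun i j => matDeg_le_iff.1 hD j i⟩

end FractionDescription

section Realization

variable {ρ ι κ : Type*} [Fintype ι] [DecidableEq ι]

/-- The strictly proper rational matrix `P (y I - M)⁻¹ Y` realized by the triple `(P, M, Y)`. -/
def transferMatrix (P : Matrix ρ ι K) (M : Matrix ι ι K) (Y : Matrix ι κ K) :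
    Matrix ρ κ (RatFunc K) :=
  P.map (algebraMap K (RatFunc K)) * ((charmatrix M).map (algebraMap K[X] (RatFunc K)))⁻¹ *
    Y.map (algebraMap K (RatFunc K))

theorem transferMatrix_transpose (P : Matrix ρ ι K) (M : Matrix ι ι K) (Y : Matrix ι κ K) :
    (transferMatrix P M Y)ᵀ = transferMatrix Yᵀ Mᵀ Pᵀ := by
  simp only [transferMatrix, transpose_mul, transpose_nonsing_inv, charmatrix_transpose,
    transpose_map, Matrix.mul_assoc]

/-- The response `w ↦ P (y I - M)⁻¹ w` of the pair `(P, M)` to the initial state `w`. -/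
def resolventMap (P : Matrix ρ ι K) (M : Matrix ι ι K) : (ι → K) →ₗ[K] (ρ → RatFunc K) :=
  (P.map (algebraMap K (RatFunc K)) *
      ((charmatrix M).map (algebraMap K[X] (RatFunc K)))⁻¹).mulVecLin.restrictScalars K ∘ₗ
    (Algebra.linearMap K (RatFunc K)).compLeft ι

variable (P : Matrix ρ ι K) (M : Matrix ι ι K)

theorem aeval_C_mulVec (c : K) (w : ι → K) : aeval M (C c) *ᵥ w = c • w := by
  rw [aeval_C, Algebra.algebraMap_eq_smul_one, smul_mulVec, one_mulVec]

theorem mulVec_aeval_mulVec (q : K[X]) (w : ι → K) :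
    M *ᵥ (aeval M q *ᵥ w) = aeval M (X * q) *ᵥ w := by
  rw [map_mul, aeval_X, mulVec_mulVec]

theorem X_smul_resolventMap (w : ι → K) : (X : K[X]) • resolventMap P M w =
    resolventMap P M (M *ᵥ w) + algebraMap K (RatFunc K) ∘ (P *ᵥ w) := by
  let A := (charmatrix M).map (algebraMap K[X] (RatFunc K))
  let P' := P.map (algebraMap K (RatFunc K))
  let w' := algebraMap K (RatFunc K) ∘ w
  have hA : A⁻¹ * A = 1 := by
    have hdet : algebraMap K[X] (RatFunc K) M.charpoly = A.det := RingHom.map_det _ _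
    refine nonsing_inv_mul A (isUnit_iff_ne_zero.2 (hdet ▸ ?_))
    exact (map_ne_zero_iff _ (IsFractionRing.injective K[X] (RatFunc K))).2
      (charpoly_monic M).ne_zero
  have hAw : A *ᵥ w' = (X : K[X]) • w' - algebraMap K (RatFunc K) ∘ (M *ᵥ w) := by
    have hAM : A = (X : K[X]) • 1 - M.map (algebraMap K (RatFunc K)) := by
      refine Matrix.ext fun i j => ?_
      change algebraMap K[X] (RatFunc K) (charmatrix M i j) = _
      rw [charmatrix_apply, map_sub, ← algebraMap_eq,
        ← IsScalarTower.algebraMap_apply, Matrix.sub_apply, Matrix.smul_apply, Matrix.map_apply,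
        one_apply, diagonal_apply]
      split_ifs <;> simp [Algebra.smul_def]
    rw [hAM, sub_mulVec, smul_mulVec, one_mulVec]
    exact congrArg _ (funext fun i => (RingHom.map_mulVec _ M w i).symm)
  calc (X : K[X]) • resolventMap P M w
      = (P' * A⁻¹) *ᵥ (algebraMap K (RatFunc K) ∘ (M *ᵥ w) + A *ᵥ w') := by
        rw [hAw, add_sub_cancel, mulVec_smul]
        rfl
    _ = resolventMap P M (M *ᵥ w) + P' *ᵥ w' := by
        rw [mulVec_add, mulVec_mulVec, Matrix.mul_assoc, hA, Matrix.mul_one]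
        rfl
    _ = resolventMap P M (M *ᵥ w) + algebraMap K (RatFunc K) ∘ (P *ᵥ w) :=
        congrArg _ (funext fun i => (RingHom.map_mulVec _ P w i).symm)

theorem exists_smul_resolventMap_eq {q : K[X]} {N : ℕ} (hq : q.natDegree ≤ N) (w : ι → K) :
    ∃ t : ρ → K[X], (∀ i, (t i).degree < N) ∧
      q • resolventMap P M w =
        resolventMap P M (aeval M q *ᵥ w) + algebraMap K[X] (RatFunc K) ∘ t := by
  induction N generalizing q w with
  | zero =>
    refine ⟨0, fun _ => WithBot.bot_lt_coe 0, ?_⟩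
    rw [eq_C_of_natDegree_le_zero hq, aeval_C_mulVec, map_smul, ← algebraMap_eq, algebraMap_smul,
      left_eq_add]
    exact funext fun _ => map_zero _
  | succ N ih =>
    have hdivX : q.divX.natDegree ≤ N := by
      rw [natDegree_divX_eq_natDegree_tsub_one]
      omega
    obtain ⟨t, ht, hqt⟩ := ih hdivX (M *ᵥ w)
    have haeval : aeval M q *ᵥ w = aeval M q.divX *ᵥ (M *ᵥ w) + q.coeff 0 • w := by
      nth_rw 1 [← divX_mul_X_add q]
      rw [map_add, add_mulVec, aeval_C_mulVec, map_mul, aeval_X, mulVec_mulVec]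
    refine ⟨t + q.divX • C ∘ (P *ᵥ w), fun i => ?_, ?_⟩
    · refine (degree_add_le_of_degree_le (ht i).le ?_).trans_lt (mod_cast N.lt_succ_self)
      exact natDegree_le_iff_degree_le.1 ((natDegree_mul_C_le _ _).trans hdivX)
    · have hcomp : q.divX • algebraMap K (RatFunc K) ∘ (P *ᵥ w) =
          algebraMap K[X] (RatFunc K) ∘ (q.divX • C ∘ (P *ᵥ w)) := by
        funext i
        simp [Algebra.smul_def]
      calc q • resolventMap P M w
          = q.divX • (X : K[X]) • resolventMap P M w + q.coeff 0 • resolventMap P M w := by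
            nth_rw 1 [← divX_mul_X_add q]
            rw [add_smul, mul_smul, ← algebraMap_eq, algebraMap_smul]
        _ = resolventMap P M (aeval M q *ᵥ w) +
              (algebraMap K[X] (RatFunc K) ∘ t + q.divX • algebraMap K (RatFunc K) ∘ (P *ᵥ w)) := by
            rw [X_smul_resolventMap, smul_add, hqt, haeval, map_add, map_smul]
            abel
        _ = resolventMap P M (aeval M q *ᵥ w) +
              algebraMap K[X] (RatFunc K) ∘ (t + q.divX • C ∘ (P *ᵥ w)) := by
            rw [hcomp]
            exact congrArg _ (funext fun i => (map_add _ _ _).symm)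

variable {P M}

theorem resolventMap_mem_polynomialVectors_iff {w : ι → K} :
    resolventMap P M w ∈ polynomialVectors K ρ ↔ resolventMap P M w = 0 := by
  refine ⟨?_, fun h => h ▸ zero_mem _⟩
  rintro ⟨s, hs⟩
  obtain ⟨t, ht, hst⟩ := exists_smul_resolventMap_eq P M (q := M.charpoly) le_rfl w
  have hM := M.charpoly_monic
  rw [aeval_self_charpoly, zero_mulVec, map_zero, zero_add, ← hs] at hst
  have hs0 (i : ρ) : s i = 0 := by
    have hi : M.charpoly * s i = t i := by
      refine IsFractionRing.injective K[X] (RatFunc K) ?_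
      rw [map_mul, ← Algebra.smul_def]
      exact congrFun hst i
    by_contra hsi
    have hlt := ht i
    rw [← hi, degree_mul, degree_eq_natDegree hsi,
      degree_eq_natDegree hM.ne_zero] at hlt
    norm_cast at hlt
    omega
  rw [← hs, funext hs0]
  exact map_zero _

theorem resolventMap_eq_zero_iff {w : ι → K} :
    resolventMap P M w = 0 ↔ ∀ q : K[X], P *ᵥ (aeval M q *ᵥ w) = 0 := by
  constructor
  · intro hw
    have haeval (q : K[X]) : resolventMap P M (aeval M q *ᵥ w) = 0 := by
      obtain ⟨t, -, hqt⟩ := exists_smul_resolventMap_eq P M (q := q) le_rfl w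
      rw [hw, smul_zero, eq_comm] at hqt
      exact resolventMap_mem_polynomialVectors_iff.1
        ((eq_neg_of_add_eq_zero_left hqt) ▸ neg_mem ⟨t, rfl⟩)
    intro q
    have hX := X_smul_resolventMap P M (aeval M q *ᵥ w)
    rw [haeval, smul_zero, mulVec_aeval_mulVec, haeval, zero_add] at hX
    exact funext fun i => (map_eq_zero_iff _ (FaithfulSMul.algebraMap_injective K (RatFunc K))).1
      (congrFun hX i).symm
  · intro hw
    have hsmul (q : K[X]) : q • resolventMap P M w = resolventMap P M (aeval M q *ᵥ w) := by
      induction q using Polynomial.induction_on with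
      | C c =>
        rw [aeval_C_mulVec, map_smul, ← algebraMap_eq, algebraMap_smul]
      | add p q hp hq => rw [add_smul, hp, hq, map_add, add_mulVec, map_add]
      | monomial k c ih =>
        rw [pow_succ', mul_left_comm, mul_smul, ih, X_smul_resolventMap, hw,
          mulVec_aeval_mulVec, add_eq_left]
        exact funext fun _ => map_zero _
    have hcharpoly := hsmul M.charpoly
    rw [aeval_self_charpoly, zero_mulVec, map_zero] at hcharpoly
    exact funext fun i => (smul_eq_zero.1 (congrFun hcharpoly i)).resolve_left
      (charpoly_monic M).ne_zero

variable [Fintype κ] (Y : Matrix ι κ K)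

/-- The state reached from the zero state under the polynomial input `v`. -/
def stateMap (M : Matrix ι ι K) (Y : Matrix ι κ K) : (κ → K[X]) →ₗ[K] (ι → K) where
  toFun v := ∑ c, aeval M (v c) *ᵥ Y.col c
  map_add' u v := by simp only [Pi.add_apply, map_add, add_mulVec, Finset.sum_add_distrib]
  map_smul' k v := by
    simp only [Pi.smul_apply, map_smul, smul_mulVec, Finset.smul_sum, RingHom.id_apply]

theorem stateMap_apply (v : κ → K[X]) : stateMap M Y v = ∑ c, aeval M (v c) *ᵥ Y.col c := rfl

theorem stateMap_single [DecidableEq κ] (c : κ) (q : K[X]) :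
    stateMap M Y (Pi.single c q) = aeval M q *ᵥ Y.col c := by
  refine (Finset.sum_eq_single c (fun b _ hb => ?_) (by simp)).trans (by rw [Pi.single_eq_same])
  rw [Pi.single_eq_of_ne hb, map_zero, zero_mulVec]

theorem mem_denomModule_transferMatrix_iff {v : κ → K[X]} :
    v ∈ denomModule (transferMatrix P M Y) ↔
      ∀ q : K[X], P *ᵥ (aeval M q *ᵥ stateMap M Y v) = 0 := by
  have hsum : transferMatrix P M Y *ᵥ (algebraMap K[X] (RatFunc K) ∘ v) =
      ∑ c, v c • resolventMap P M (Y.col c) := by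
    rw [mulVec_eq_sum]
    refine Finset.sum_congr rfl fun c _ => ?_
    rw [Function.comp_apply, op_smul_eq_smul, algebraMap_smul]
    rfl
  have hterm (c : κ) : v c • resolventMap P M (Y.col c) -
      resolventMap P M (aeval M (v c) *ᵥ Y.col c) ∈ polynomialVectors K ρ := by
    obtain ⟨t, -, ht⟩ := exists_smul_resolventMap_eq P M (q := v c) le_rfl (Y.col c)
    exact ⟨t, (sub_eq_of_eq_add' ht).symm⟩
  have hsub := sum_mem (fun c (_ : c ∈ Finset.univ) => hterm c)
  rw [Finset.sum_sub_distrib, ← hsum, ← map_sum] at hsub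
  rw [mem_denomModule, ← resolventMap_eq_zero_iff, ← resolventMap_mem_polynomialVectors_iff]
  refine ⟨fun h => ?_, fun h => ?_⟩
  · exact (Submodule.sub_mem_iff_right _ h).1 hsub
  · exact (Submodule.sub_mem_iff_left _ h).1 hsub

theorem aeval_transpose (q : K[X]) : aeval Mᵀ q = (aeval M q)ᵀ := by
  induction q using Polynomial.induction_on' with
  | add p q hp hq => rw [map_add, map_add, hp, hq, transpose_add]
  | monomial k c =>
    rw [aeval_monomial, aeval_monomial, ← Algebra.smul_def, ← Algebra.smul_def, transpose_smul,
      transpose_pow]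

variable [Fintype ρ]

/-- The bilinear form `(u, v) ↦ ∑ᵢⱼ (P uᵢ(M) vⱼ(M) Y)ᵢⱼ` between polynomial vectors, written as the
dot product of an observed costate and a reached state. -/
def realizationPairing (P : Matrix ρ ι K) (M : Matrix ι ι K) (Y : Matrix ι κ K) :
    (ρ → K[X]) →ₗ[K] (κ → K[X]) →ₗ[K] K :=
  (dotProductBilin K K).compl₁₂ (stateMap Mᵀ Pᵀ) (stateMap M Y)

theorem realizationPairing_single [DecidableEq ρ] (r : ρ) (q : K[X]) (v : κ → K[X]) :
    realizationPairing P M Y (Pi.single r q) v = (P *ᵥ (aeval M q *ᵥ stateMap M Y v)) r := by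
  change stateMap Mᵀ Pᵀ (Pi.single r q) ⬝ᵥ stateMap M Y v = P r ⬝ᵥ _
  rw [stateMap_single, aeval_transpose, mulVec_transpose, dotProduct_mulVec]
  rfl

theorem ker_realizationPairing_flip : LinearMap.ker (realizationPairing P M Y).flip =
    (denomModule (transferMatrix P M Y)).restrictScalars K := by
  classical
  ext v
  rw [LinearMap.mem_ker, Submodule.restrictScalars_mem, mem_denomModule_transferMatrix_iff]
  constructor
  · intro hv q
    funext r
    rw [← realizationPairing_single]
    exact LinearMap.congr_fun hv _
  · intro hv
    refine LinearMap.pi_ext fun r q => ?_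
    rw [LinearMap.flip_apply, realizationPairing_single, hv]
    rfl

theorem realizationPairing_flip :
    (realizationPairing P M Y).flip = realizationPairing Yᵀ Mᵀ Pᵀ := by
  refine LinearMap.ext fun u => LinearMap.ext fun v => ?_
  simp only [LinearMap.flip_apply, realizationPairing, LinearMap.compl₁₂_apply,
    transpose_transpose]
  exact dotProduct_comm (stateMap Mᵀ Pᵀ v) (stateMap M Y u)

theorem ker_realizationPairing : LinearMap.ker (realizationPairing P M Y) =
    (denomModule (transferMatrix P M Y)ᵀ).restrictScalars K := by
  rw [transferMatrix_transpose, ← ker_realizationPairing_flip, ← realizationPairing_flip,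
    LinearMap.flip_flip]

/-- The block Hankel matrix of the Markov parameters `P M^k Y`, with `e` block rows and `d` block
columns. -/
def blockHankel (P : Matrix ρ ι K) (M : Matrix ι ι K) (Y : Matrix ι κ K) (e d : ℕ) :
    Matrix (Fin e × ρ) (Fin d × κ) K :=
  Matrix.of fun p q => (P * M ^ (p.1 + q.1 : ℕ) * Y) p.2 q.2

theorem blockHankel_eq_gramMatrix [DecidableEq ρ] [DecidableEq κ] (e d : ℕ) :
    blockHankel P M Y e d =
      gramMatrix (realizationPairing P M Y) (monomialVec K ρ e) (monomialVec K κ d) := by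
  ext p q
  simp only [blockHankel, gramMatrix, of_apply, monomialVec, realizationPairing_single,
    stateMap_single, mulVec_mulVec, map_pow, aeval_X, pow_add, Matrix.mul_assoc]
  simp only [← Matrix.mul_assoc]
  rfl

end Realization

section RealizationRank

variable {ι : Type*} [Fintype ι] [DecidableEq ι] {ℓ m : ℕ} {P : Matrix (Fin ℓ) ι K}
  {M : Matrix ι ι K} {Y : Matrix ι (Fin m) K} {D : Matrix (Fin m) (Fin m) K[X]}

theorem finite_quotient_ker_realizationPairing_flip (hdet : D.det ≠ 0)
    (hD : LinearMap.range D.mulVecLin = denomModule (transferMatrix P M Y)) :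
    Module.Finite K ((Fin m → K[X]) ⧸ LinearMap.ker (realizationPairing P M Y).flip) := by
  have := finite_quotient_range_mulVecLin hdet
  rw [ker_realizationPairing_flip, ← hD]
  exact Module.Finite.equiv (Submodule.Quotient.restrictScalarsEquiv K _).symm

theorem finrank_quotient_ker_realizationPairing_flip (hdet : D.det ≠ 0)
    (hD : LinearMap.range D.mulVecLin = denomModule (transferMatrix P M Y)) :
    Module.finrank K ((Fin m → K[X]) ⧸ LinearMap.ker (realizationPairing P M Y).flip) =
      D.det.natDegree := by
  rw [ker_realizationPairing_flip, ← hD, ← finrank_quotient_range_mulVecLin hdet]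
  exact (Submodule.Quotient.restrictScalarsEquiv K _).finrank_eq

theorem rank_blockHankel_le (hdet : D.det ≠ 0)
    (hD : LinearMap.range D.mulVecLin = denomModule (transferMatrix P M Y)) (e d : ℕ) :
    (blockHankel P M Y e d).rank ≤ D.det.natDegree := by
  have := finite_quotient_ker_realizationPairing_flip hdet hD
  rw [blockHankel_eq_gramMatrix, ← finrank_quotient_ker_realizationPairing_flip hdet hD]
  exact rank_gramMatrix_le _ _ _

theorem rank_blockHankel_eq_iff (hdet : D.det ≠ 0)
    (hD : LinearMap.range D.mulVecLin = denomModule (transferMatrix P M Y)) (e d : ℕ) :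
    (blockHankel P M Y e d).rank = D.det.natDegree ↔
      (∃ N E, IsRightDesc (transferMatrix P M Y) N E ∧ matDeg E ≤ d) ∧
        ∃ E N, IsLeftDesc (transferMatrix P M Y) E N ∧ matDeg E ≤ e := by
  have := finite_quotient_ker_realizationPairing_flip hdet hD
  rw [blockHankel_eq_gramMatrix, ← finrank_quotient_ker_realizationPairing_flip hdet hD,
    rank_gramMatrix_eq_iff, ker_realizationPairing_flip, ker_realizationPairing,
    exists_isRightDesc_matDeg_le_iff, exists_isLeftDesc_matDeg_le_iff]

end RealizationRank

section Modulo

variable {f : K[X]} {n : ℕ} (a : K[X])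

/-- Coefficients of `x^0, …, x^(n-1)` in the remainder modulo `f`. -/
def modCoeffs (f : K[X]) (n : ℕ) : K[X] →ₗ[K] (Fin n → K) where
  toFun g i := (g % f).coeff i
  map_add' g h := funext fun i => by rw [add_mod, coeff_add, Pi.add_apply]
  map_smul' c g := funext fun i => by
    rw [mod_def, smul_modByMonic, coeff_smul, ← mod_def, Pi.smul_apply, RingHom.id_apply]

theorem coeff_mod_eq_zero_of_le (hf : f.degree = n) (g : K[X]) {k : ℕ} (hk : n ≤ k) :
    (g % f).coeff k = 0 := by
  refine coeff_eq_zero_of_degree_lt ((degree_mod_lt g fun h0 => ?_).trans_le ?_)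
  · simp [h0] at hf
  · exact hf.le.trans (by exact_mod_cast hk)

theorem mod_eq_sum_modCoeffs (hf : f.degree = n) (g : K[X]) :
    g % f = ∑ k, modCoeffs f n g k • X ^ (k : ℕ) := by
  have hsum : ∑ k, modCoeffs f n g k • X ^ (k : ℕ) =
      ∑ k ∈ Finset.range n, (g % f).coeff k • (X ^ k : K[X]) :=
    Fin.sum_univ_eq_sum_range (fun k => (g % f).coeff k • (X ^ k : K[X])) n
  ext k
  simp only [hsum, finsetSum_coeff, coeff_smul, coeff_X_pow, smul_eq_mul, mul_ite, mul_one,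
    mul_zero, Finset.sum_ite_eq, Finset.mem_range]
  split_ifs with hk
  · rfl
  · exact coeff_mod_eq_zero_of_le hf g (not_lt.1 hk)

theorem modCoeffs_mul_mod (g : K[X]) : modCoeffs f n (a * (g % f)) = modCoeffs f n (a * g) := by
  have hmod : a * (g % f) % f = a * g % f := mod_eq_of_dvd_sub ⟨-(a * (g / f)), by
    linear_combination a * EuclideanDomain.div_add_mod g f⟩
  exact funext fun i => congrArg (coeff · i) hmod

theorem mulMat_mulVec_modCoeffs (hf : f.degree = n) (g : K[X]) :
    mulMat f a n *ᵥ modCoeffs f n g = modCoeffs f n (a * g) := by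
  rw [← modCoeffs_mul_mod, mod_eq_sum_modCoeffs hf, Finset.mul_sum, map_sum, mulVec_eq_sum]
  refine Finset.sum_congr rfl fun k _ => ?_
  rw [op_smul_eq_smul, mul_smul_comm, map_smul, mul_comm]
  rfl

theorem aeval_mulMat_mulVec_modCoeffs (hf : f.degree = n) (q g : K[X]) :
    aeval (mulMat f a n) q *ᵥ modCoeffs f n g = modCoeffs f n (q.comp a * g) := by
  induction q using Polynomial.induction_on with
  | C c => rw [aeval_C_mulVec, C_comp, ← smul_eq_C_mul, map_smul]
  | add p q hp hq => rw [map_add, add_mulVec, hp, hq, add_comp, add_mul, map_add]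
  | monomial k c ih =>
    rw [pow_succ', mul_left_comm, ← mulVec_aeval_mulVec, ih, mulMat_mulVec_modCoeffs a hf,
      mul_comp X, X_comp, mul_assoc]

variable {ℓ m : ℕ}

theorem Xup_col_eq_modCoeffs (hf : f.degree = n) (hmn : m ≤ n) (c : Fin m) :
    (Xup K n m).col c = modCoeffs f n (X ^ (c : ℕ)) := by
  have hf0 : f ≠ 0 := fun h0 => by simp [h0] at hf
  have hmod : (X ^ (c : ℕ) : K[X]) % f = X ^ (c : ℕ) := by
    rw [mod_eq_self_iff hf0, degree_X_pow, hf]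
    exact_mod_cast c.2.trans_le hmn
  funext i
  change _ = (_ % f).coeff i
  rw [hmod, coeff_X_pow]
  rfl

theorem stateMap_mulMat_Xup (hf : f.degree = n) (hmn : m ≤ n) (v : Fin m → K[X]) :
    stateMap (mulMat f a n) (Xup K n m) v = modCoeffs f n (relEval a v) := by
  rw [stateMap_apply, relEval, map_sum]
  refine Finset.sum_congr rfl fun c _ => ?_
  rw [Xup_col_eq_modCoeffs hf hmn, aeval_mulMat_mulVec_modCoeffs a hf, mul_comm]

theorem projL_mulVec_modCoeffs (hf : f.degree = n) (g : K[X]) (r : Fin ℓ) :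
    (projL K ℓ n *ᵥ modCoeffs f n g) r = (g % f).coeff r := by
  have hentry : (projL K ℓ n *ᵥ modCoeffs f n g) r =
      ∑ k : Fin n, if (r : ℕ) = k then (g % f).coeff k else 0 := by
    simp only [mulVec, dotProduct, projL, ite_mul, one_mul, zero_mul, modCoeffs, LinearMap.coe_mk,
      AddHom.coe_mk]
  rw [hentry, Fin.sum_univ_eq_sum_range (fun k => if (r : ℕ) = k then (g % f).coeff k else 0) n,
    Finset.sum_ite_eq]
  split_ifs with hr
  · rfl
  · exact (coeff_mod_eq_zero_of_le hf g (by simpa using hr)).symm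

theorem isTruncRelation_iff (hf : f.degree = n) {v : Fin m → K[X]} :
    IsTruncRelation f a ℓ v ↔
      ∀ q : K[X], projL K ℓ n *ᵥ modCoeffs f n (q.comp a * relEval a v) = 0 := by
  constructor
  · intro hv q
    induction q using Polynomial.induction_on' with
    | add p q hp hq => rw [add_comp, add_mul, map_add, mulVec_add, hp, hq, add_zero]
    | monomial k c =>
      rw [monomial_comp, mul_assoc, ← smul_eq_C_mul, map_smul, mulVec_smul]
      refine smul_eq_zero_of_right c (funext fun r => ?_)
      rw [projL_mulVec_modCoeffs hf]
      exact hv k r r.2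
  · intro hv k j hj
    rw [← projL_mulVec_modCoeffs hf _ ⟨j, hj⟩, ← X_pow_comp, hv]
    rfl

theorem fracMat_eq_transferMatrix : fracMat f a n ℓ m =
    transferMatrix (projL K ℓ n) (mulMat f a n) (Xup K n m) := by
  have hP : (projL K ℓ n).map (algebraMap K (RatFunc K)) = projL (RatFunc K) ℓ n := by
    ext i j
    simp [projL, apply_ite]
  have hY : (Xup K n m).map (algebraMap K (RatFunc K)) = Xup (RatFunc K) n m := by
    ext i j
    simp [Xup, apply_ite]
  rw [fracMat, transferMatrix, hP, hY]

theorem mem_denomModule_fracMat_iff (hf : f.degree = n) (hmn : m ≤ n) {v : Fin m → K[X]} :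
    v ∈ denomModule (fracMat f a n ℓ m) ↔ IsTruncRelation f a ℓ v := by
  rw [fracMat_eq_transferMatrix, mem_denomModule_transferMatrix_iff, isTruncRelation_iff a hf]
  simp only [stateMap_mulMat_Xup a hf hmn, aeval_mulMat_mulVec_modCoeffs a hf]

variable {a}

theorem range_mulVecLin_eq_denomModule (hf : f.degree = n) (hmn : m ≤ n)
    {D : Matrix (Fin m) (Fin m) K[X]} (hD : IsTruncBasis f a ℓ D) :
    LinearMap.range D.mulVecLin = denomModule (fracMat f a n ℓ m) := by
  rw [range_mulVecLin]
  refine le_antisymm (Submodule.span_le.2 ?_) fun v hv => ?_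
  · rintro _ ⟨j, rfl⟩
    exact (mem_denomModule_fracMat_iff a hf hmn).2 (hD.2.1 j)
  · exact hD.2.2 v ((mem_denomModule_fracMat_iff a hf hmn).1 hv)

theorem Xup_transpose : (Xup K n m)ᵀ = projL K m n := by
  ext i j
  simp only [transpose_apply, Xup, projL, eq_comm]

theorem hankelMat_eq_blockHankel (d : ℕ) : hankelMat f a n m d =
    blockHankel (projL K m n) (mulMat f a n) (Xup K n m) d d := by
  rw [← Xup_transpose]
  rfl

end Modulo

theorem rank_hankel_le_truncDeterminantalDegree_general
    {n ℓ m : ℕ} (hmn : m ≤ n) {f : K[X]} (hf : f.degree = n) (a : K[X])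
    {D₀ : Matrix (Fin m) (Fin m) K[X]} (hD₀ : IsTruncBasis f a ℓ D₀) (e d : ℕ) :
    (blockHankel (projL K ℓ n) (mulMat f a n) (Xup K n m) e d).rank ≤ D₀.det.natDegree ∧
    ((blockHankel (projL K ℓ n) (mulMat f a n) (Xup K n m) e d).rank = D₀.det.natDegree ↔
      (∃ N D, IsRightDesc (fracMat f a n ℓ m) N D ∧ matDeg D ≤ d) ∧
        ∃ D N, IsLeftDesc (fracMat f a n ℓ m) D N ∧ matDeg D ≤ e) := by
  have hrange := range_mulVecLin_eq_denomModule hf hmn hD₀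
  rw [fracMat_eq_transferMatrix] at hrange ⊢
  exact ⟨rank_blockHankel_le hD₀.1 hrange e d, rank_blockHankel_eq_iff hD₀.1 hrange e d⟩

theorem rank_hankel_le_truncDeterminantalDegree
    (n m d : ℕ) (hn : 1 ≤ n) (hm : 1 ≤ m) (hmn : m ≤ n) (hd : 1 ≤ d)
    (f a : K[X]) (hf : f.natDegree = n) (ha : a.degree < (n : WithBot ℕ))
    (D₀ : Matrix (Fin m) (Fin m) K[X]) (hD₀ : IsTruncBasis f a m D₀) :
    (hankelMat f a n m d).rank ≤ D₀.det.natDegree ∧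
    ((hankelMat f a n m d).rank = D₀.det.natDegree ↔
      DescribableInDegree (fracMat f a n m m) d) := by
  rw [hankelMat_eq_blockHankel]
  exact rank_hankel_le_truncDeterminantalDegree_general hmn
    ((degree_eq_iff_natDegree_eq_of_pos hn).2 hf) a hD₀ d d
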